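/- Under the renewal setup, there exist bounded operators A_n on ℒ with ‖A_n‖ → 0 as n → ∞ such that for every z in the open unit disk, ((I − R(z))/(1 − z))⁻¹ = (1/μ) P + (1 − z) Σ_{n≥0} A_n zⁿ (the series converging in operator norm for |z| < 1). -/

import Mathlib

/-!
The coefficients of `(1 - R(z))⁻¹` have to be shown to converge to `μ⁻¹ P` in norm. Let
`C(z) = (R(1) - R(z)) / (1 - z)`, whose coefficients are the tails `Σ_{k > n} Rₖ` and hence are
summable in norm, and put `D(z) = C(z) P + (1 - R(z)) (1 - P)`. As `R(1) P = P`,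
`D(z) = (1 - R(z)) (P / (1 - z) + (1 - P))` for `z ≠ 1`, so `D(z)` is invertible there. At `z = 1`,
`D(1) = R'(1) P + (1 - R(1)) (1 - P)` is block triangular with invertible diagonal blocks `μ` and
`(1 - R(1))` on `ker P`, so it is invertible as well (`isUnit_tsum_renewalReg`).

Wiener's lemma with values in a Banach algebra (`wiener_lemma`) gives `D(z)⁻¹ = Σ zⁿ Eₙ` with
`Σ ‖Eₙ‖ < ∞`. Therefore `(1 - R(z))⁻¹ = (P / (1 - z) + (1 - P)) E(z)` has the coefficients
`P (E₀ + ⋯ + Eₙ) + (1 - P) Eₙ`, which converge to `P E(1) = P D(1)⁻¹ = μ⁻¹ P`, because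
`P D(1) = μ P`.

The proof of Wiener's lemma is a noncommutative version of Gelfand's. In a Banach algebra, an element
that is not left invertible lies in a closed maximal left ideal `M`. The variable `z` of the
convolution algebra is central, so it acts on the simple module `A ⧸ M` as a scalar `c` with
`|c| ≤ 1` (`exists_sub_algebraMap_mem_of_isMaximal`); modulo `M` the series `D` then becomes the
invertible constant `D(c)`, which is absurd. The convolution algebra is realized as the centralizer,
inside the bounded operators on `ℓ¹(ℕ, B)`, of the shift and the right multiplications.
-/

open MeasureTheory Filter Topology

/-- `R(z) = Σ_{n} R_n zⁿ`. -/
noncomputable def renewalRz {L : Type*} [NormedAddCommGroup L] [NormedSpace ℂ L]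
    (R : ℕ → L →L[ℂ] L) (z : ℂ) : L →L[ℂ] L := ∑' n : ℕ, z ^ n • R n

/-! ### Left invertibility over a central element -/

/-- A central element `S` of a complex Banach algebra acts as a scalar `c` on the simple module
`A ⧸ M`. By Schur's lemma each `S - c` acts on it as zero or bijectively, and the second cannot
happen for all `c` because the spectrum of a bounded operator is nonempty. -/
theorem exists_sub_algebraMap_mem_of_isMaximal {A : Type*} [NormedRing A] [NormedAlgebra ℂ A]
    [CompleteSpace A] (S : A) (hS : ∀ a, S * a = a * S) (M : Ideal A) [hM : M.IsMaximal] :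
    ∃ c : ℂ, S - algebraMap ℂ A c ∈ M := by
  have hsimple : IsSimpleModule A (A ⧸ M) := isSimpleModule_iff_isCoatom.mpr hM.out
  have hnt : Nontrivial (A ⧸ M) := IsSimpleModule.nontrivial A (A ⧸ M)
  -- multiplication by `S - c`, as an `A`-linear map of the simple module `A ⧸ M`
  let m : ℂ → (A ⧸ M) →ₗ[A] (A ⧸ M) := fun c =>
    { toFun := fun x => (S - algebraMap ℂ A c) • x
      map_add' := fun x y => smul_add _ x y
      map_smul' := fun a x => by
        simp only [smul_smul, RingHom.id_apply]
        rw [sub_mul, mul_sub, hS a, Algebra.commutes] }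
  let s : (A ⧸ M) →L[ℂ] (A ⧸ M) :=
    { toFun := fun x => S • x
      map_add' := fun x y => smul_add _ x y
      map_smul' := fun a x => by
        obtain ⟨y, rfl⟩ := Submodule.Quotient.mk_surjective M x
        simp only [← Submodule.Quotient.mk_smul, RingHom.id_apply, smul_eq_mul, mul_smul_comm]
      cont := by
        refine continuous_quot_lift _ ?_
        exact continuous_quot_mk.comp (continuous_const.mul continuous_id) }
  obtain ⟨c, hc⟩ := spectrum.nonempty s
  have hs : ∀ x, (algebraMap ℂ ((A ⧸ M) →L[ℂ] (A ⧸ M)) c - s) x = - m c x := by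
    intro x
    obtain ⟨y, rfl⟩ := Submodule.Quotient.mk_surjective M x
    change c • (Submodule.Quotient.mk y : A ⧸ M) - S • (Submodule.Quotient.mk y : A ⧸ M) =
      -((S - algebraMap ℂ A c) • (Submodule.Quotient.mk y : A ⧸ M))
    simp only [← Submodule.Quotient.mk_smul, ← Submodule.Quotient.mk_sub,
      ← Submodule.Quotient.mk_neg, smul_eq_mul, Algebra.smul_def, sub_mul, neg_sub]
  refine ⟨c, ?_⟩
  rcases LinearMap.bijective_or_eq_zero (m c) with hb | h0
  · exfalso
    refine hc ?_
    have hb' : Function.Bijective (algebraMap ℂ ((A ⧸ M) →L[ℂ] (A ⧸ M)) c - s) := by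
      have : ⇑(algebraMap ℂ ((A ⧸ M) →L[ℂ] (A ⧸ M)) c - s) = Neg.neg ∘ m c := funext hs
      rw [this]
      exact neg_bijective.comp hb
    exact (ContinuousLinearMap.isUnit_iff_bijective).mpr hb'
  · have := LinearMap.congr_fun h0 (Submodule.Quotient.mk (1 : A))
    change (S - algebraMap ℂ A c) • (Submodule.Quotient.mk (1 : A) : A ⧸ M) = 0 at this
    rw [← Submodule.Quotient.mk_smul, smul_eq_mul, mul_one] at this
    exact (Submodule.Quotient.mk_eq_zero M).mp this

/-- A local-global principle for left invertibility of `T = Σ Sⁿ φ(Dₙ)` with `S` central. If `T` were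
not left invertible, it would lie in a maximal left ideal `M`; some `S - c` lies in `M`, so modulo
`M` the element `T` equals `φ(D(c))`, which is invertible. -/
theorem exists_mul_tsum_eq_one {A B : Type*} [NormedRing A] [NormedAlgebra ℂ A] [CompleteSpace A]
    [NormedRing B] [NormedAlgebra ℂ B] [CompleteSpace B] (h1 : ‖(1 : A)‖ ≤ 1)
    (S : A) (hS : ∀ a, S * a = a * S) (hS1 : ‖S‖ ≤ 1)
    (φ : B →ₐ[ℂ] A) (hφ : ∀ b, ‖φ b‖ ≤ ‖b‖)
    (D : ℕ → B) (hD : Summable fun n => ‖D n‖)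
    (hU : ∀ z : ℂ, ‖z‖ ≤ 1 → IsUnit (∑' n, z ^ n • D n)) :
    ∃ E T : A, HasSum (fun n => S ^ n * φ (D n)) T ∧ E * T = 1 := by
  set T : A := ∑' n, S ^ n * φ (D n) with hT
  have hSpow : ∀ n, ‖S ^ n‖ ≤ 1 := by
    intro n
    induction n with
    | zero => simpa using h1
    | succ n ih =>
      rw [pow_succ]
      exact (norm_mul_le _ _).trans (mul_le_one₀ ih (norm_nonneg _) hS1)
  have hTsum : Summable fun n => S ^ n * φ (D n) := by
    refine Summable.of_norm_bounded hD fun n => (norm_mul_le _ _).trans ?_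
    calc ‖S ^ n‖ * ‖φ (D n)‖ ≤ 1 * ‖D n‖ := by gcongr; exacts [hSpow n, hφ _]
      _ = _ := one_mul _
  by_contra hne
  have hspan : Ideal.span {T} ≠ ⊤ := by
    intro h
    apply hne
    obtain ⟨E, hE⟩ := Ideal.mem_span_singleton'.mp ((Ideal.eq_top_iff_one _).mp h)
    exact ⟨E, T, hTsum.hasSum, hE⟩
  obtain ⟨M, hM, hTM⟩ := Ideal.exists_le_maximal _ hspan
  have hTM : T ∈ M := hTM (Ideal.mem_span_singleton_self T)
  obtain ⟨c, hc⟩ := exists_sub_algebraMap_mem_of_isMaximal S hS M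
  have hc1 : ‖c‖ ≤ 1 := by
    by_contra! hlt
    have hu : IsUnit (algebraMap ℂ A c - S) := by
      refine spectrum.mem_resolventSet_of_norm_lt_mul (?_ : ‖S‖ * ‖(1 : A)‖ < ‖c‖)
      exact (mul_le_one₀ hS1 (norm_nonneg _) h1).trans_lt hlt
    refine hM.ne_top (Ideal.eq_top_of_isUnit_mem M ?_ hu)
    simpa using M.neg_mem hc
  have hcsum : Summable fun n => c ^ n • D n := by
    refine Summable.of_norm_bounded hD fun n => ?_
    rw [norm_smul, norm_pow]
    exact mul_le_of_le_one_left (norm_nonneg _) (pow_le_one₀ (norm_nonneg _) hc1)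
  have hφc : Continuous φ := by
    refine AddMonoidHomClass.continuous_of_bound φ 1 fun b => ?_
    simpa using hφ b
  -- `Sⁿ - cⁿ` is a multiple of `S - c`, and maximal left ideals are closed
  have hdiff : T - φ (∑' n, c ^ n • D n) ∈ M := by
    have h2 : HasSum (fun n => S ^ n * φ (D n) - φ (c ^ n • D n))
        (T - φ (∑' n, c ^ n • D n)) :=
      hTsum.hasSum.sub (hcsum.hasSum.map φ hφc)
    refine IsClosed.mem_of_tendsto (Ideal.IsMaximal.isClosed (I := M)) h2
      (Eventually.of_forall fun s => M.sum_mem fun n _ => ?_)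
    have hcomm : Commute S (algebraMap ℂ A c) := hS _
    have : S ^ n * φ (D n) - φ (c ^ n • D n)
        = (φ (D n) * ∑ i ∈ Finset.range n, S ^ i * algebraMap ℂ A c ^ (n - 1 - i)) *
          (S - algebraMap ℂ A c) := by
      rw [mul_assoc, hcomm.geom_sum₂_mul, mul_sub, map_smul, Algebra.smul_def, map_pow,
        ← map_pow, ← Algebra.commutes (c ^ n)]
      congr 1
      exact Commute.pow_left (hS _) n
    rw [this]
    exact M.mul_mem_left _ hc
  have hφM : φ (∑' n, c ^ n • D n) ∈ M := by
    simpa using M.sub_mem hTM hdiff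
  exact hM.ne_top (Ideal.eq_top_of_isUnit_mem M hφM ((hU c hc1).map φ))

/-- The same principle when `S` and the values of `φ` merely commute with a set `Z` containing `S`;
the left inverse then commutes with `Z` too. It follows by passing to the centralizer of `Z`, a closed
subalgebra in which `S` is central. -/
theorem exists_commuting_mul_eq_one {A B : Type*} [NormedRing A] [NormedAlgebra ℂ A]
    [CompleteSpace A] [NormedRing B] [NormedAlgebra ℂ B] [CompleteSpace B] (h1 : ‖(1 : A)‖ ≤ 1)
    (Z : Set A) (S : A) (hSZ : S ∈ Z) (hZS : ∀ g ∈ Z, g * S = S * g) (hS1 : ‖S‖ ≤ 1)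
    (φ : B →ₐ[ℂ] A) (hφ : ∀ b, ‖φ b‖ ≤ ‖b‖) (hφZ : ∀ b, ∀ g ∈ Z, g * φ b = φ b * g)
    (D : ℕ → B) (hD : Summable fun n => ‖D n‖)
    (hU : ∀ z : ℂ, ‖z‖ ≤ 1 → IsUnit (∑' n, z ^ n • D n)) :
    ∃ E T : A, (∀ g ∈ Z, g * E = E * g) ∧ HasSum (fun n => S ^ n * φ (D n)) T ∧ E * T = 1 := by
  let C : Subalgebra ℂ A := Subalgebra.centralizer ℂ Z
  have hclosed : IsClosed (C : Set A) := Set.isClosed_centralizer _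
  have hcomplete : CompleteSpace C := hclosed.completeSpace_coe
  let S' : C := ⟨S, (Subalgebra.mem_centralizer_iff ℂ).mpr hZS⟩
  let φ' : B →ₐ[ℂ] C := φ.codRestrict C fun b => (Subalgebra.mem_centralizer_iff ℂ).mpr (hφZ b)
  obtain ⟨E, T, hT, hET⟩ := exists_mul_tsum_eq_one (A := C) h1 S'
    (fun a => Subtype.ext ((Subalgebra.mem_centralizer_iff ℂ).mp a.2 S hSZ)) hS1 φ' hφ D hD hU
  refine ⟨E, T, (Subalgebra.mem_centralizer_iff ℂ).mp E.2, ?_, congrArg Subtype.val hET⟩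
  exact hT.map C.val continuous_subtype_val

/-! ### Wiener's lemma in `ℓ¹(ℕ, B)` -/

section EllOne

/-- The Banach space `ℓ¹(ℕ, B)`. -/
abbrev EllOne (B : Type*) [NormedRing B] : Type _ := lp (fun _ : ℕ => B) 1

variable {B : Type*} [NormedRing B]

theorem ellOne_summable (y : EllOne B) : Summable fun n => ‖y n‖ := by
  simpa using (lp.memℓp y).summable (by simp)

theorem ellOne_norm (y : EllOne B) : ‖y‖ = ∑' n, ‖y n‖ := by
  rw [lp.norm_eq_tsum_rpow (by simp)]
  simp

theorem memlp_one_of_summable {f : ℕ → B} (hf : Summable fun n => ‖f n‖) :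
    Memℓp (E := fun _ : ℕ => B) f 1 :=
  memℓp_gen (by simpa using hf)

variable [NormedAlgebra ℂ B]

/-- The operator on `ℓ¹(ℕ, B)` that applies a bounded operator `f` to each entry. -/
noncomputable def ellOneMap (f : B →L[ℂ] B) :
    EllOne B →L[ℂ] EllOne B :=
  LinearMap.mkContinuous
    { toFun := fun y => ⟨fun n => f (y n), memlp_one_of_summable
        (Summable.of_nonneg_of_le (fun _ => norm_nonneg _) (fun n => f.le_opNorm (y n))
          ((ellOne_summable y).mul_left ‖f‖))⟩
      map_add' := fun x y => by
        apply lp.ext; funext n; exact map_add f (x n) (y n)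
      map_smul' := fun c y => by
        apply lp.ext; funext n; exact map_smul f c (y n) }
    ‖f‖ (fun y => by
      rw [ellOne_norm, ellOne_norm, ← tsum_mul_left]
      exact Summable.tsum_le_tsum (fun n => f.le_opNorm (y n))
        (ellOne_summable _) ((ellOne_summable y).mul_left ‖f‖))

theorem ellOneMap_apply (f : B →L[ℂ] B) (y : EllOne B) (n : ℕ) :
    ellOneMap f y n = f (y n) := rfl

theorem norm_ellOneMap_le (f : B →L[ℂ] B) : ‖ellOneMap f‖ ≤ ‖f‖ :=
  LinearMap.mkContinuous_norm_le _ (norm_nonneg _) _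

/-- The right shift `(y₀, y₁, …) ↦ (0, y₀, y₁, …)`, i.e. multiplication of the generating function
by `z`. -/
noncomputable def ellOneShift :
    EllOne B →L[ℂ] EllOne B :=
  LinearMap.mkContinuous
    { toFun := fun y => ⟨fun n => Nat.casesOn n 0 fun k => y k, memlp_one_of_summable
        ((summable_nat_add_iff 1).mp (ellOne_summable y))⟩
      map_add' := fun x y => by
        apply lp.ext; funext n
        cases n with
        | zero => exact (add_zero (0 : B)).symm
        | succ n => rfl
      map_smul' := fun c y => by
        apply lp.ext; funext n
        cases n with
        | zero => exact (smul_zero c).symm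
        | succ n => rfl }
    1 (fun y => by
      rw [ellOne_norm, ellOne_norm, one_mul, (ellOne_summable _).tsum_eq_zero_add]
      refine le_of_eq (add_eq_right.mpr ?_)
      exact norm_zero)

theorem ellOneShift_zero (y : EllOne B) : ellOneShift y 0 = 0 := rfl

theorem ellOneShift_succ (y : EllOne B) (n : ℕ) : ellOneShift y (n + 1) = y n := rfl

theorem norm_ellOneShift_le : ‖(ellOneShift (B := B))‖ ≤ 1 :=
  LinearMap.mkContinuous_norm_le _ zero_le_one _

theorem shift_comm_map (f : B →L[ℂ] B) :
    ellOneShift * ellOneMap f = ellOneMap f * ellOneShift := by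
  ext y n
  cases n with
  | zero => exact (map_zero f).symm
  | succ n => rfl

/-- Left multiplication of all entries by an element of `B`. -/
noncomputable def ellOneLeft : B →ₐ[ℂ] (EllOne B →L[ℂ] EllOne B) :=
  AlgHom.ofLinearMap
    { toFun := fun b => ellOneMap (ContinuousLinearMap.mul ℂ B b)
      map_add' := fun b c => by
        ext y n
        exact add_mul b c (y n)
      map_smul' := fun t b => by
        ext y n
        exact smul_mul_assoc t b (y n) }
    (by ext y n; exact one_mul (y n))
    (fun b c => by ext y n; exact mul_assoc b c (y n))

theorem ellOneLeft_apply (b : B) (y : EllOne B) (n : ℕ) : ellOneLeft b y n = b * y n := rfl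

/-- Right multiplication of all entries by an element of `B`. -/
noncomputable def ellOneRight (b : B) : EllOne B →L[ℂ] EllOne B :=
  ellOneMap ((ContinuousLinearMap.mul ℂ B).flip b)

theorem ellOneRight_apply (b : B) (y : EllOne B) (n : ℕ) : ellOneRight b y n = y n * b := rfl

variable [CompleteSpace B]

theorem summable_pow_smul {z : ℂ} (hz : ‖z‖ ≤ 1) {f : ℕ → B} (hf : Summable fun n => ‖f n‖) :
    Summable fun n => z ^ n • f n := by
  refine Summable.of_norm_bounded hf fun n => ?_
  rw [norm_smul, norm_pow]
  exact mul_le_of_le_one_left (norm_nonneg _) (pow_le_one₀ (norm_nonneg _) hz)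

/-- The value `Σ zⁿ yₙ` of the generating function of `y ∈ ℓ¹(ℕ, B)` at a point `z` of the closed
unit disk. -/
noncomputable def ellOneEval (z : ℂ) (hz : ‖z‖ ≤ 1) : EllOne B →L[ℂ] B :=
  LinearMap.mkContinuous
    { toFun := fun y => ∑' n, z ^ n • y n
      map_add' := fun x y => by
        rw [← (summable_pow_smul hz (ellOne_summable x)).tsum_add
          (summable_pow_smul hz (ellOne_summable y))]
        exact tsum_congr fun n => smul_add _ _ _
      map_smul' := fun c y => by
        rw [RingHom.id_apply, ← (summable_pow_smul hz (ellOne_summable y)).tsum_const_smul]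
        exact tsum_congr fun n => smul_comm _ _ _ }
    1 (fun y => by
      rw [ellOne_norm, one_mul]
      refine tsum_of_norm_bounded (ellOne_summable y).hasSum fun n => ?_
      rw [norm_smul, norm_pow]
      exact mul_le_of_le_one_left (norm_nonneg _) (pow_le_one₀ (norm_nonneg _) hz))

theorem ellOneEval_apply (z : ℂ) (hz : ‖z‖ ≤ 1) (y : EllOne B) :
    ellOneEval z hz y = ∑' n, z ^ n • y n := rfl

theorem ellOneEval_shift (z : ℂ) (hz : ‖z‖ ≤ 1) (y : EllOne B) :
    ellOneEval z hz (ellOneShift y) = z • ellOneEval z hz y := by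
  have hsum : Summable fun n => z ^ n • ellOneShift y n :=
    summable_pow_smul hz (ellOne_summable (ellOneShift y))
  rw [ellOneEval_apply, hsum.tsum_eq_zero_add,
    ellOneShift_zero, smul_zero, zero_add, ellOneEval_apply,
    ← (summable_pow_smul hz (ellOne_summable y)).tsum_const_smul]
  exact tsum_congr fun n => by rw [ellOneShift_succ, pow_succ', mul_smul]

theorem ellOneEval_shift_pow (z : ℂ) (hz : ‖z‖ ≤ 1) (n : ℕ) (y : EllOne B) :
    ellOneEval z hz ((ellOneShift ^ n) y) = z ^ n • ellOneEval z hz y := by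
  induction n with
  | zero => simp
  | succ n ih =>
    rw [pow_succ', mul_apply_eq_comp, ellOneEval_shift, ih, smul_smul, pow_succ']

theorem ellOneEval_right (z : ℂ) (hz : ‖z‖ ≤ 1) (b : B) (y : EllOne B) :
    ellOneEval z hz (ellOneRight b y) = ellOneEval z hz y * b := by
  rw [ellOneEval_apply, ellOneEval_apply,
    ← (summable_pow_smul hz (ellOne_summable y)).tsum_mul_right]
  refine tsum_congr fun n => ?_
  rw [ellOneRight_apply, smul_mul_assoc]

/-- **Wiener's lemma** for absolutely convergent power series with coefficients in a complex Banach
algebra: pointwise invertibility on the closed disk gives an inverse with summable coefficients.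

The operators on `ℓ¹(ℕ, B)` commuting with the shift and with right multiplications form a copy of
the convolution algebra `ℓ¹(ℕ, B)`, in which the shift is central. A left inverse `F` there of left
convolution by `D` gives the coefficients `E = F δ`, with `δ = (1, 0, 0, …)`. -/
theorem wiener_lemma (D : ℕ → B) (hD : Summable fun n => ‖D n‖)
    (hU : ∀ z : ℂ, ‖z‖ ≤ 1 → IsUnit (∑' n, z ^ n • D n)) :
    ∃ E : ℕ → B, (Summable fun n => ‖E n‖) ∧
      ∀ z : ℂ, ‖z‖ ≤ 1 → (∑' n, z ^ n • E n) * (∑' n, z ^ n • D n) = 1 := by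
  have hφ : ∀ b : B, ‖ellOneLeft b‖ ≤ ‖b‖ := fun b =>
    (norm_ellOneMap_le _).trans (ContinuousLinearMap.opNorm_mul_apply_le ℂ B b)
  obtain ⟨F, T, hFZ, hT, hF⟩ := exists_commuting_mul_eq_one
    (A := EllOne B →L[ℂ] EllOne B) ContinuousLinearMap.norm_id_le
    ({ellOneShift} ∪ Set.range ellOneRight) ellOneShift (Or.inl rfl)
    (by
      rintro g (rfl | ⟨b, rfl⟩)
      · rfl
      · exact (shift_comm_map _).symm)
    norm_ellOneShift_le ellOneLeft hφ
    (by
      rintro b g (rfl | ⟨c, rfl⟩)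
      · exact shift_comm_map _
      · ext y n
        exact mul_assoc b (y n) c)
    D hD hU
  let δ : EllOne B := lp.single 1 0 1
  have hδ0 : δ 0 = 1 := lp.single_apply_self 1 0 1
  have hδn : ∀ n, n ≠ 0 → δ n = 0 := fun n hn => lp.single_apply_ne 1 0 1 hn
  refine ⟨fun n => F δ n, ellOne_summable _, fun z hz => ?_⟩
  -- the functional `a ↦ (F a δ)(z)`
  let ev : (EllOne B →L[ℂ] EllOne B) →+ B :=
    { toFun := fun a => ellOneEval z hz (F (a δ))
      map_zero' := by simp
      map_add' := by simp }
  have hevc : Continuous ev :=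
    (ellOneEval z hz).continuous.comp (F.continuous.comp (continuous_id.clm_apply continuous_const))
  have hev : ∀ a, ev a = ellOneEval z hz (F (a δ)) := fun a => rfl
  have hlhs : ev T = 1 := by
    rw [hev, ← mul_apply_eq_comp, hF, one_apply_eq_self, ellOneEval_apply,
      tsum_eq_single 0 fun n hn => by rw [hδn n hn, smul_zero], hδ0, pow_zero, one_smul]
  have hterm : ∀ n, ev (ellOneShift ^ n * ellOneLeft (D n)) =
      ellOneEval z hz (F δ) * (z ^ n • D n) := by
    intro n
    have hδ : ellOneLeft (D n) δ = ellOneRight (D n) δ := by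
      ext k
      rw [ellOneLeft_apply, ellOneRight_apply]
      by_cases hk : k = 0
      · rw [hk, hδ0, one_mul, mul_one]
      · rw [hδn k hk, zero_mul, mul_zero]
    have hFS : Commute (ellOneShift ^ n) F := Commute.pow_left (hFZ _ (Or.inl rfl)) n
    have hFr : ellOneRight (D n) * F = F * ellOneRight (D n) := hFZ _ (Or.inr ⟨D n, rfl⟩)
    rw [hev, mul_apply_eq_comp, hδ, ← mul_apply_eq_comp, ← hFS.eq, mul_apply_eq_comp,
      ellOneEval_shift_pow, ← mul_apply_eq_comp, ← hFr, mul_apply_eq_comp, ellOneEval_right,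
      mul_smul_comm]
  have h3 : HasSum (fun n => ellOneEval z hz (F δ) * (z ^ n • D n)) (ev T) := by
    have := hT.map ev hevc
    exact this.congr_fun fun n => (hterm n).symm
  have h4 := (summable_pow_smul hz hD).hasSum.mul_left (ellOneEval z hz (F δ))
  exact (h4.unique h3).trans hlhs

end EllOne

/-! ### The regularized renewal series -/

section Assembly

set_option linter.unusedSectionVars false

variable {B : Type*} [NormedRing B] [NormedAlgebra ℂ B]

/-- Abel summation for power series: `(1 - z) Σ zⁿ cₙ = c₀ + Σ zⁿ⁺¹ (cₙ₊₁ - cₙ)`. -/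
theorem hasSum_abel (z : ℂ) (c : ℕ → B) (s : B) (hs : HasSum (fun n => z ^ n • c n) s) :
    HasSum (fun n => z ^ (n + 1) • (c (n + 1) - c n)) ((1 - z) • s - c 0) := by
  have h1 : HasSum (fun n => z ^ (n + 1) • c (n + 1)) (s - c 0) := by
    have := (hasSum_nat_add_iff' 1).mpr hs
    simpa using this
  have h2 : HasSum (fun n => z ^ (n + 1) • c n) (z • s) := by
    simpa only [smul_smul, ← pow_succ'] using hs.const_smul z
  have h3 := h1.sub h2
  simp only [← smul_sub] at h3
  rwa [sub_right_comm, ← one_smul ℂ s, smul_smul, mul_one, ← sub_smul] at h3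

/-- The tails `Σ_{k > n} Rₖ`. -/
noncomputable def renewalTail (R : ℕ → B) (n : ℕ) : B := ∑' k, if n < k then R k else 0

theorem summable_tail_prod (R : ℕ → B) (hR : Summable fun n : ℕ => (n : ℝ) * ‖R n‖) :
    Summable fun p : ℕ × ℕ => ‖if p.2 < p.1 then R p.1 else 0‖ := by
  have hfin : ∀ k : ℕ, ∀ n ∉ Finset.range k, ‖if n < k then R k else 0‖ = 0 := by
    intro k n hn
    simp [Finset.mem_range.not.mp hn]
  refine (summable_prod_of_nonneg fun p => norm_nonneg _).mpr ⟨fun k => ?_, ?_⟩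
  · exact summable_of_ne_finset_zero (hfin k)
  · refine hR.congr fun k => ?_
    rw [tsum_eq_sum (hfin k), Finset.sum_congr rfl (g := fun _ => ‖R k‖)]
    · simp
    · intro n hn
      simp [Finset.mem_range.mp hn]

theorem summable_norm_of_mul (R : ℕ → B) (hR : Summable fun n : ℕ => (n : ℝ) * ‖R n‖) :
    Summable fun n => ‖R n‖ := by
  refine (summable_nat_add_iff 1).mp (Summable.of_nonneg_of_le (fun _ => norm_nonneg _)
    (fun n => ?_) ((summable_nat_add_iff 1).mpr hR))
  refine le_mul_of_one_le_left (norm_nonneg _) ?_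
  push_cast
  linarith [(Nat.cast_nonneg n : (0 : ℝ) ≤ n)]

variable [CompleteSpace B]

theorem summable_norm_renewalTail (R : ℕ → B) (hR : Summable fun n : ℕ => (n : ℝ) * ‖R n‖) :
    Summable fun n => ‖renewalTail R n‖ := by
  have h := (summable_tail_prod R hR).prod_symm
  refine Summable.of_nonneg_of_le (fun _ => norm_nonneg _) (fun n => ?_) h.prod
  exact norm_tsum_le_tsum_norm (h.prod_factor n)

theorem tsum_renewalTail (R : ℕ → B) (hR : Summable fun n : ℕ => (n : ℝ) * ‖R n‖) :
    ∑' n, renewalTail R n = ∑' n : ℕ, (n : ℂ) • R n := by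
  have h : Summable (Function.uncurry fun n k : ℕ => if n < k then R k else 0) :=
    Summable.of_norm (summable_tail_prod R hR).prod_symm
  unfold renewalTail
  rw [← Summable.tsum_comm (f := fun n k : ℕ => if n < k then R k else 0) h]
  refine tsum_congr fun k => ?_
  rw [tsum_eq_sum (s := Finset.range k) fun n hn => by simp [Finset.mem_range.not.mp hn],
    Finset.sum_congr rfl (g := fun _ => R k) fun n hn => by simp [Finset.mem_range.mp hn]]
  simp [Nat.cast_smul_eq_nsmul]

theorem renewalTail_succ (R : ℕ → B) (hR : Summable fun n => ‖R n‖) (n : ℕ) :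
    renewalTail R (n + 1) - renewalTail R n = - R (n + 1) := by
  have h : ∀ m : ℕ, Summable fun k => if m < k then R k else 0 := fun m =>
    Summable.of_norm_bounded hR fun k => by split_ifs <;> simp
  unfold renewalTail
  rw [← (h _).tsum_sub (h _), tsum_eq_single (n + 1)]
  · simp
  · intro k hk
    by_cases h1 : n + 1 < k
    · simp [h1, (Nat.lt_succ_self n).trans h1]
    · have : ¬ n < k := by omega
      simp [h1, this]

/-- `(1 - z) Σ zⁿ (Σ_{k > n} Rₖ) = R(1) - R(z)`. -/
theorem one_sub_smul_tsum_tail (R : ℕ → B) (hR0 : R 0 = 0)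
    (hR : Summable fun n : ℕ => (n : ℝ) * ‖R n‖) (z : ℂ) (hz : ‖z‖ ≤ 1) :
    (1 - z) • ∑' n, z ^ n • renewalTail R n = ∑' n, R n - ∑' n, z ^ n • R n := by
  have hRn := summable_norm_of_mul R hR
  have h1 := hasSum_abel z _ _ (summable_pow_smul hz (summable_norm_renewalTail R hR)).hasSum
  simp only [renewalTail_succ R hRn, smul_neg] at h1
  have h2 : HasSum (fun n => z ^ (n + 1) • R (n + 1)) (∑' n, z ^ n • R n) := by
    have := (hasSum_nat_add_iff' 1).mpr (summable_pow_smul hz hRn).hasSum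
    simpa [hR0] using this
  have h3 := h1.unique h2.neg
  have h4 : renewalTail R 0 = ∑' n, R n := by
    refine tsum_congr fun k => ?_
    rcases Nat.eq_zero_or_pos k with rfl | hk
    · simp [hR0]
    · simp [hk]
  rw [← h4, sub_eq_iff_eq_add.mp h3]
  abel

/-- The coefficients of the regularized series `D(z) = C(z) P + (1 - R(z)) (1 - P)`, where `C(z)` is
the generating function of the tails of `R`. -/
noncomputable def renewalReg (R : ℕ → B) (P : B) (n : ℕ) : B :=
  renewalTail R n * P + ((if n = 0 then 1 else 0) - R n) * (1 - P)

theorem summable_norm_renewalReg (R : ℕ → B) (hR : Summable fun n : ℕ => (n : ℝ) * ‖R n‖) (P : B) :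
    Summable fun n => ‖renewalReg R P n‖ := by
  have h0 : Summable fun n : ℕ => ‖(if n = 0 then 1 else 0 : B)‖ :=
    summable_of_ne_finset_zero (s := {0}) fun n hn => by simp [Finset.mem_singleton.not.mp hn]
  refine Summable.of_nonneg_of_le (fun _ => norm_nonneg _) (fun n => ?_)
    (((summable_norm_renewalTail R hR).mul_right ‖P‖).add
      ((h0.add (summable_norm_of_mul R hR)).mul_right ‖1 - P‖))
  refine (norm_add_le _ _).trans (add_le_add (norm_mul_le _ _) ((norm_mul_le _ _).trans ?_))
  exact mul_le_mul_of_nonneg_right (norm_sub_le _ _) (norm_nonneg _)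

theorem tsum_renewalReg (R : ℕ → B) (hR : Summable fun n : ℕ => (n : ℝ) * ‖R n‖) (P : B)
    (z : ℂ) (hz : ‖z‖ ≤ 1) :
    ∑' n, z ^ n • renewalReg R P n =
      (∑' n, z ^ n • renewalTail R n) * P + (1 - ∑' n, z ^ n • R n) * (1 - P) := by
  have h0 : HasSum (fun n : ℕ => z ^ n • (if n = 0 then 1 else 0 : B)) 1 := by
    have := hasSum_single (f := fun n : ℕ => z ^ n • (if n = 0 then 1 else 0 : B)) 0
      fun n hn => by simp [hn]
    simpa using this
  have h1 := (summable_pow_smul hz (summable_norm_renewalTail R hR)).hasSum.mul_right P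
  have h2 := (h0.sub (summable_pow_smul hz (summable_norm_of_mul R hR)).hasSum).mul_right (1 - P)
  rw [← (h1.add h2).tsum_eq]
  refine tsum_congr fun n => ?_
  rw [renewalReg, smul_add, ← smul_mul_assoc, ← smul_mul_assoc, smul_sub]

/-- Away from `z = 1` the regularized series is `(1 - z)⁻¹ (1 - R(z)) (P + (1 - z) (1 - P))`: since
`R(1) P = P`, the tail series satisfies `(1 - z) C(z) P = (1 - R(z)) P`. -/
theorem tsum_renewalReg_of_ne (R : ℕ → B) (hR0 : R 0 = 0)
    (hR : Summable fun n : ℕ => (n : ℝ) * ‖R n‖) (P : B)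
    (hRP : (∑' n, R n) * P = P) (z : ℂ) (hz : ‖z‖ ≤ 1) (hz1 : z ≠ 1) :
    ∑' n, z ^ n • renewalReg R P n =
      ((1 - z)⁻¹ • (1 - ∑' n, z ^ n • R n)) * (P + (1 - z) • (1 - P)) := by
  have hne : 1 - z ≠ 0 := sub_ne_zero.mpr hz1.symm
  rw [tsum_renewalReg R hR P z hz, ← inv_smul_smul₀ hne (∑' n, z ^ n • renewalTail R n),
    one_sub_smul_tsum_tail R hR0 hR z hz, mul_add, mul_smul_comm, smul_mul_assoc (1 - z)⁻¹ _ (1 - P),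
    smul_inv_smul₀ hne, smul_mul_assoc, smul_mul_assoc, sub_mul _ _ P, hRP,
    sub_mul _ _ P, one_mul]

/-- The regularized series is invertible on the whole closed disk. At `z ≠ 1` it is a product of
invertible elements; at `z = 1` it is block triangular with respect to `P`, with diagonal blocks
`μ` and `(1 - R(1))` restricted to the kernel of `P`. -/
theorem isUnit_tsum_renewalReg (R : ℕ → B) (hR0 : R 0 = 0)
    (hR : Summable fun n : ℕ => (n : ℝ) * ‖R n‖) (P Q : B) (hPP : P * P = P)
    (hPR : P * (∑' n, R n) = P) (hRP : (∑' n, R n) * P = P)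
    (hQ1 : Q * (1 - ∑' n, R n) = 1 - P) (hQ2 : (1 - ∑' n, R n) * Q = 1 - P)
    (hPQ : P * Q = 0)
    (hinv : ∀ z : ℂ, ‖z‖ ≤ 1 → z ≠ 1 → IsUnit (1 - ∑' n, z ^ n • R n))
    (μ : ℂ) (hμ : μ ≠ 0) (hPNP : P * (∑' n : ℕ, (n : ℂ) • R n) * P = μ • P)
    (z : ℂ) (hz : ‖z‖ ≤ 1) : IsUnit (∑' n, z ^ n • renewalReg R P n) := by
  by_cases hz1 : z = 1
  · subst hz1
    have hD := tsum_renewalReg R hR P 1 hz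
    simp only [one_pow, one_smul, tsum_renewalTail R hR] at hD ⊢
    rw [hD]
    generalize (∑' n, R n) = U at *
    generalize (∑' n : ℕ, (n : ℂ) • R n) = N at *
    have hD' : N * P + (1 - U) * (1 - P) = N * P + (1 - U) := by
      rw [mul_sub (1 - U), mul_one, sub_mul 1 U P, hRP, one_mul, sub_self, sub_zero]
    rw [hD']
    have e1 : (N * P + (1 - U)) * P = N * P := by
      rw [add_mul, sub_mul, hRP, mul_assoc, hPP, one_mul, sub_self, add_zero]
    have e2 : (N * P + (1 - U)) * Q = 1 - P := by
      rw [add_mul, mul_assoc, hPQ, mul_zero, zero_add, hQ2]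
    have e3 : P * (N * P + (1 - U)) = μ • P := by
      rw [mul_add, mul_sub, hPR, mul_one, sub_self, add_zero, ← mul_assoc, hPNP]
    have e4 : Q * (N * P + (1 - U)) = Q * N * P + (1 - P) := by
      rw [mul_add, hQ1, mul_assoc]
    refine isUnit_iff_exists.mpr ⟨μ⁻¹ • P + Q - μ⁻¹ • (Q * N * P), ?_, ?_⟩
    · have e5 : (N * P + (1 - U)) * (Q * N * P) = N * P - μ • P := by
        rw [mul_assoc Q, ← mul_assoc _ Q, e2, sub_mul, one_mul, ← mul_assoc, hPNP]
      rw [mul_sub, mul_add, mul_smul_comm, mul_smul_comm, e1, e2, e5, smul_sub, smul_smul,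
        inv_mul_cancel₀ hμ, one_smul]
      abel
    · rw [sub_mul, add_mul, smul_mul_assoc, smul_mul_assoc, e3, e4, mul_assoc (Q * N), e3,
        mul_smul_comm, smul_smul, smul_smul, inv_mul_cancel₀ hμ, one_smul, one_smul]
      abel
  · have hne : 1 - z ≠ 0 := sub_ne_zero.mpr (Ne.symm hz1)
    rw [tsum_renewalReg_of_ne R hR0 hR P hRP z hz hz1]
    refine IsUnit.mul ((isUnit_smul_iff (Units.mk0 _ (inv_ne_zero hne)) _).mpr (hinv z hz hz1)) ?_
    have hPc : P * (1 - P) = 0 := by rw [mul_sub, mul_one, hPP, sub_self]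
    have hcP : (1 - P) * P = 0 := by rw [sub_mul, one_mul, hPP, sub_self]
    have hcc : (1 - P) * (1 - P) = 1 - P := by rw [sub_mul, hPc, one_mul, sub_zero]
    refine isUnit_iff_exists.mpr ⟨P + (1 - z)⁻¹ • (1 - P), ?_, ?_⟩
    · simp only [add_mul, mul_add, smul_mul_assoc, mul_smul_comm, hPP, hPc, hcP, hcc, smul_zero]
      rw [zero_add, inv_smul_smul₀ hne]
      abel
    · simp only [add_mul, mul_add, smul_mul_assoc, mul_smul_comm, hPP, hPc, hcP, hcc, smul_zero]
      rw [zero_add, smul_inv_smul₀ hne]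
      abel

/-- The renewal expansion in an arbitrary complex Banach algebra. With `E = D⁻¹` provided by Wiener's
lemma, `(1 - R(z))⁻¹ = (P / (1 - z) + (1 - P)) E(z)` has the `n`-th coefficient
`P (E₀ + ⋯ + Eₙ) + (1 - P) Eₙ`, which tends to `P E(1) = μ⁻¹ P`; `Aₙ` is the difference. -/
theorem renewal_expansion_banach (R : ℕ → B) (hR0 : R 0 = 0)
    (hR : Summable fun n : ℕ => (n : ℝ) * ‖R n‖) (P Q : B) (hPP : P * P = P)
    (hPR : P * (∑' n, R n) = P) (hRP : (∑' n, R n) * P = P)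
    (hQ1 : Q * (1 - ∑' n, R n) = 1 - P) (hQ2 : (1 - ∑' n, R n) * Q = 1 - P)
    (hPQ : P * Q = 0)
    (hinv : ∀ z : ℂ, ‖z‖ ≤ 1 → z ≠ 1 → IsUnit (1 - ∑' n, z ^ n • R n))
    (μ : ℂ) (hμ : μ ≠ 0) (hPNP : P * (∑' n : ℕ, (n : ℂ) • R n) * P = μ • P) :
    ∃ A : ℕ → B, Tendsto (fun n => ‖A n‖) atTop (𝓝 0) ∧
      ∀ z ∈ Metric.ball (0 : ℂ) 1, ∃ Az : B, HasSum (fun n => z ^ n • A n) Az ∧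
        Ring.inverse ((1 - z)⁻¹ • (1 - ∑' n, z ^ n • R n)) = μ⁻¹ • P + (1 - z) • Az := by
  have hU := isUnit_tsum_renewalReg R hR0 hR P Q hPP hPR hRP hQ1 hQ2 hPQ hinv μ hμ hPNP
  obtain ⟨E, hE, hED⟩ := wiener_lemma (renewalReg R P) (summable_norm_renewalReg R hR P) hU
  -- pointwise, a left inverse of an invertible element is also a right inverse
  have hDE : ∀ z : ℂ, ‖z‖ ≤ 1 → (∑' n, z ^ n • renewalReg R P n) * (∑' n, z ^ n • E n) = 1 := by
    intro z hz
    obtain ⟨u, hu⟩ := hU z hz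
    have h := hED z hz
    rw [← hu] at h ⊢
    rw [← Units.inv_eq_of_mul_eq_one_left h, Units.mul_inv]
  let t : ℕ → B := fun n => ∑ k ∈ Finset.range (n + 1), E k
  have hPE : P * ∑' n, E n = μ⁻¹ • P := by
    have hD1 : P * ∑' n, renewalReg R P n = μ • P := by
      have hD := tsum_renewalReg R hR P 1 (by simp)
      simp only [one_pow, one_smul, tsum_renewalTail R hR] at hD
      rw [hD, mul_add, ← mul_assoc, hPNP, ← mul_assoc, mul_sub P 1, hPR, mul_one, sub_self, zero_mul,
        add_zero]
    have h1 := hDE 1 (by simp)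
    simp only [one_pow, one_smul] at h1
    have h2 : μ • (P * ∑' n, E n) = P := by
      rw [← smul_mul_assoc, ← hD1, mul_assoc, h1, mul_one]
    rw [← inv_smul_smul₀ hμ (P * ∑' n, E n), h2]
  have ht : Tendsto t atTop (𝓝 (∑' n, E n)) :=
    (hE.of_norm.hasSum.tendsto_sum_nat).comp (tendsto_add_atTop_nat 1)
  refine ⟨fun n => P * t n + (1 - P) * E n - μ⁻¹ • P, ?_, fun z hz => ?_⟩
  · have h1 : Tendsto (fun n => P * t n + (1 - P) * E n - μ⁻¹ • P) atTop
        (𝓝 (P * (∑' n, E n) + (1 - P) * 0 - μ⁻¹ • P)) :=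
      ((ht.const_mul P).add ((hE.of_norm.tendsto_atTop_zero).const_mul (1 - P))).sub_const _
    rw [hPE, mul_zero, add_zero, sub_self] at h1
    simpa using h1.norm
  · have hz' : ‖z‖ < 1 := by simpa using hz
    have hz1 : z ≠ 1 := by rintro rfl; simp at hz'
    have hne : 1 - z ≠ 0 := sub_ne_zero.mpr hz1.symm
    have hgeo : Summable fun n : ℕ => ‖z ^ n‖ := by
      simpa using summable_geometric_of_lt_one (norm_nonneg z) hz'
    have hEz := (summable_pow_smul hz'.le hE).hasSum
    have htsum : Summable fun n => z ^ n • t n := by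
      refine Summable.of_norm_bounded (hgeo.mul_right (∑' n, ‖E n‖)) fun n => ?_
      rw [norm_smul]
      gcongr
      exact (norm_sum_le _ _).trans (hE.sum_le_tsum _ fun _ _ => norm_nonneg _)
    have habel : (1 - z) • ∑' n, z ^ n • t n = ∑' n, z ^ n • E n := by
      have h1 := hasSum_abel z t _ htsum.hasSum
      have h2 := (hasSum_nat_add_iff' 1).mpr hEz
      have h3 : ∀ n, t (n + 1) - t n = E (n + 1) := fun n => by
        simp only [t]
        rw [Finset.sum_range_succ _ (n + 1), add_sub_cancel_left]
      simp only [h3] at h1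
      have h4 := h1.unique h2
      simpa [t] using h4
    have hgeoP : HasSum (fun n => z ^ n • (μ⁻¹ • P)) ((1 - z)⁻¹ • (μ⁻¹ • P)) :=
      (hasSum_geometric_of_norm_lt_one hz').smul_const _
    refine ⟨P * (∑' n, z ^ n • t n) + (1 - P) * (∑' n, z ^ n • E n) - (1 - z)⁻¹ • (μ⁻¹ • P),
      ?_, ?_⟩
    · have := ((htsum.hasSum.mul_left P).add (hEz.mul_left (1 - P))).sub hgeoP
      refine this.congr_fun fun n => ?_
      simp only [smul_sub, smul_add, mul_smul_comm]
    · have hX : IsUnit ((1 - z)⁻¹ • (1 - ∑' n, z ^ n • R n)) :=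
        (isUnit_smul_iff (Units.mk0 _ (inv_ne_zero hne)) _).mpr (hinv z hz'.le hz1)
      have hXW := tsum_renewalReg_of_ne R hR0 hR P hRP z hz'.le hz1
      have hrhs : μ⁻¹ • P + (1 - z) • (P * (∑' n, z ^ n • t n) + (1 - P) * (∑' n, z ^ n • E n)
          - (1 - z)⁻¹ • (μ⁻¹ • P)) = (P + (1 - z) • (1 - P)) * ∑' n, z ^ n • E n := by
        rw [smul_sub, smul_inv_smul₀ hne, smul_add, ← mul_smul_comm, habel, add_mul,
          smul_mul_assoc]
        abel
      rw [hrhs]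
      have h1 := hDE z hz'.le
      rw [hXW, mul_assoc] at h1
      obtain ⟨u, hu⟩ := hX
      rw [← hu] at h1 ⊢
      rw [Ring.inverse_unit]
      exact (Units.inv_eq_of_mul_eq_one_right h1)

end Assembly

/-- Under the renewal setup, `((I - R(z))/(1-z))⁻¹ = (1/μ) P + (1-z) Σ_n A_n zⁿ`
on the open unit disk, with `‖A_n‖ → 0`. -/
theorem renewal_inverse_expansion {L : Type*} [NormedAddCommGroup L] [NormedSpace ℂ L]
    [CompleteSpace L]
    (R : ℕ → L →L[ℂ] L) (hR0 : R 0 = 0)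
    (hRsum : Summable fun n : ℕ => (n : ℝ) * ‖R n‖)
    (P : L →L[ℂ] L) (hPne : P ≠ 0) (hPproj : P * P = P)
    (hPrank : Module.finrank ℂ (LinearMap.range (P : L →ₗ[ℂ] L)) = 1)
    (hPR : P * renewalRz R 1 = P) (hRP : renewalRz R 1 * P = P)
    (hker : ∃ Q : L →L[ℂ] L, Q * (1 - renewalRz R 1) = 1 - P ∧
      (1 - renewalRz R 1) * Q = 1 - P ∧ Q * P = 0 ∧ P * Q = 0)
    (hinv : ∀ z : ℂ, ‖z‖ ≤ 1 → z ≠ 1 → IsUnit (1 - renewalRz R z))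
    (μ : ℝ) (hμ : μ ≠ 0)
    (hPRP : P * (∑' n : ℕ, (n : ℂ) • R n) * P = (μ : ℂ) • P) :
    ∃ A : ℕ → L →L[ℂ] L,
      Tendsto (fun n => ‖A n‖) atTop (𝓝 0) ∧
      ∀ z ∈ Metric.ball (0:ℂ) 1, ∃ Az : L →L[ℂ] L,
        HasSum (fun n => z ^ n • A n) Az ∧
        Ring.inverse ((1 - z)⁻¹ • (1 - renewalRz R z)) = ((μ : ℂ))⁻¹ • P + (1 - z) • Az := by
  obtain ⟨Q, hQ1, hQ2, -, hPQ⟩ := hker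
  have h1 : renewalRz R 1 = ∑' n, R n := by simp [renewalRz]
  rw [h1] at hPR hRP hQ1 hQ2
  exact renewal_expansion_banach R hR0 hRsum P Q hPproj hPR hRP hQ1 hQ2 hPQ hinv (μ : ℂ)
    (Complex.ofReal_ne_zero.mpr hμ) hPRP
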